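/- Let D be a domain in ℂ and let I be a proper fixed ideal of H(D), i.e., I ≠ H(D) and there exists a point ζ ∈ D with f(ζ) = 0 for all f ∈ I. Then ki(I) := ⋂_{n=1}^∞ Iⁿ = {0}. -/

import Mathlib

set_option synthInstance.maxHeartbeats 400000
set_option maxHeartbeats 800000

/-- The Krull intersection of an ideal `I`: the intersection `⋂_{n=1}^∞ Iⁿ`. -/
def ki {R : Type*} [CommRing R] (I : Ideal R) : Ideal R :=
  ⨅ (n : ℕ) (_ : 1 ≤ n), I ^ n

/-- The ring `H(D)` of holomorphic functions on a set `D ⊆ ℂ`, realized as the subalgebra of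
`D → ℂ` (with pointwise operations) of functions admitting a holomorphic (complex
differentiable) extension to (an ambient function on) `D`. -/
def Hol (D : Set ℂ) : Subalgebra ℂ (D → ℂ) where
  carrier := {f | ∃ F : ℂ → ℂ, DifferentiableOn ℂ F D ∧ ∀ z : D, F z = f z}
  add_mem' := by
    rintro f g ⟨F, hF, hFf⟩ ⟨G, hG, hGg⟩
    exact ⟨F + G, hF.add hG, fun z => by simp [hFf z, hGg z]⟩
  mul_mem' := by
    rintro f g ⟨F, hF, hFf⟩ ⟨G, hG, hGg⟩
    exact ⟨F * G, hF.mul hG, fun z => by simp [hFf z, hGg z]⟩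
  algebraMap_mem' := fun c => ⟨fun _ => c, differentiableOn_const c, fun _ => rfl⟩

/-- The zero set `Z_D(f) = {z ∈ D : f(z) = 0}` of `f ∈ H(D)`. -/
def ZD {D : Set ℂ} (f : Hol D) : Set D := {z | (f : D → ℂ) z = 0}

/-- `ordGE f ζ n` says that the order (multiplicity) of `ζ` as a zero of `f ∈ H(D)` is at
least `n`, expressed by the (equivalent, for `D` open) divisibility condition that
`(z - ζ)^n` divides `f` in `H(D)`. -/
def ordGE {D : Set ℂ} (f : Hol D) (ζ : D) (n : ℕ) : Prop :=
  ∃ g : Hol D, ∀ z : D, (f : D → ℂ) z = ((z : ℂ) - (ζ : ℂ)) ^ n * (g : D → ℂ) z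

/-!
If every function in `I` vanishes at `ζ`, then `I` is contained in the principal ideal generated
by `z - ζ`, so a function in every power of `I` is divisible by every power of `z - ζ`. Its order
of vanishing at `ζ` is therefore infinite, and the identity theorem makes it zero on `D`.
-/

section KrullIntersection

variable {R : Type*} [CommRing R]

theorem ki_mono {I J : Ideal R} (hIJ : I ≤ J) : ki I ≤ ki J :=
  iInf₂_mono fun n _ => Ideal.pow_right_mono hIJ n

theorem mem_ki {I : Ideal R} {a : R} : a ∈ ki I ↔ ∀ n, a ∈ I ^ n := by
  simp only [ki, Submodule.mem_iInf]
  refine ⟨fun h n => ?_, fun h n _ => h n⟩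
  exact Ideal.pow_le_pow_right n.le_succ (h (n + 1) n.succ_pos)

theorem mem_ki_span_singleton {a b : R} : b ∈ ki (Ideal.span {a}) ↔ ∀ n, a ^ n ∣ b := by
  simp only [mem_ki, Ideal.span_singleton_pow, Ideal.mem_span_singleton]

end KrullIntersection

namespace Hol

variable {D : Set ℂ}

/-- The function `z ↦ z - ζ` in `H(D)`, whose powers measure the order of vanishing at `ζ`. -/
def subPoint (ζ : D) : Hol D :=
  ⟨fun z => (z : ℂ) - ζ, fun z => z - ζ, differentiableOn_id.sub_const _, fun _ => rfl⟩

theorem ordGE_iff_subPoint_pow_dvd {f : Hol D} {ζ : D} {n : ℕ} :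
    ordGE f ζ n ↔ subPoint ζ ^ n ∣ f :=
  exists_congr fun _ => ⟨fun h => Subtype.ext (funext h), fun h z => congrFun (congrArg _ h) z⟩

theorem subPoint_dvd_iff {f : Hol D} {ζ : D} (hζ : D ∈ nhds (ζ : ℂ)) :
    subPoint ζ ∣ f ↔ (f : D → ℂ) ζ = 0 := by
  constructor
  · rintro ⟨g, rfl⟩
    simp [subPoint]
  · intro hfζ
    obtain ⟨F, hF, hFf⟩ := f.2
    have hFζ : F ζ = 0 := (hFf ζ).trans hfζ
    let g : Hol D := ⟨fun z => dslope F ζ z, dslope F ζ,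
      (Complex.differentiableOn_dslope hζ).2 hF, fun _ => rfl⟩
    refine ⟨g, Subtype.ext (funext fun z => ?_)⟩
    calc (f : D → ℂ) z = F z - F ζ := by rw [hFζ, sub_zero, hFf]
      _ = (z - ζ) * dslope F ζ z := (sub_smul_dslope F ζ z).symm

theorem eq_zero_of_forall_ordGE (hD : IsOpen D) (hDconn : IsPreconnected D) {f : Hol D} {ζ : D}
    (hf : ∀ n, ordGE f ζ n) : f = 0 := by
  obtain ⟨F, hF, hFf⟩ := f.2
  have hDζ : D ∈ nhds (ζ : ℂ) := hD.mem_nhds ζ.2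
  have order_eq_top : analyticOrderAt F ζ = ⊤ := by
    refine ENat.eq_top_iff_forall_ge.2 fun n => ?_
    obtain ⟨g, hfg⟩ := hf n
    obtain ⟨G, hG, hGg⟩ := g.2
    refine (natCast_le_analyticOrderAt (hF.analyticAt hDζ)).2 ⟨G, hG.analyticAt hDζ, ?_⟩
    filter_upwards [hDζ] with z hz
    rw [hFf ⟨z, hz⟩, hfg, hGg ⟨z, hz⟩, smul_eq_mul]
  have F_eqOn_zero : Set.EqOn F 0 D :=
    (hF.analyticOnNhd hD).eqOn_zero_of_preconnected_of_eventuallyEq_zero hDconn ζ.2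
      (analyticOrderAt_eq_top.1 order_eq_top)
  exact Subtype.ext (funext fun z => (hFf z).symm.trans (F_eqOn_zero z.2))

end Hol

/-- If `D` is a domain in `ℂ` (a nonempty open connected set) and `I` is a proper fixed ideal
of `H(D)` (i.e. `I ≠ H(D)` and there is `ζ ∈ D` with `f(ζ) = 0` for all `f ∈ I`), then
`ki(I) = ⋂_{n=1}^∞ Iⁿ = {0}`. -/
theorem ki_eq_bot_of_fixed {D : Set ℂ} (hD : IsOpen D) (hDconn : IsConnected D)
    (I : Ideal (Hol D)) (hI : I ≠ ⊤)
    (hfixed : ∃ ζ : D, ∀ f ∈ I, (f : D → ℂ) ζ = 0) :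
    ki I = ⊥ := by
  obtain ⟨ζ, hζ⟩ := hfixed
  have I_le_span : I ≤ Ideal.span {Hol.subPoint ζ} := fun f hf =>
    Ideal.mem_span_singleton.2 ((Hol.subPoint_dvd_iff (hD.mem_nhds ζ.2)).2 (hζ f hf))
  refine (Submodule.eq_bot_iff _).2 fun f hf => ?_
  have subPoint_pow_dvd : ∀ n, Hol.subPoint ζ ^ n ∣ f :=
    mem_ki_span_singleton.1 (ki_mono I_le_span hf)
  exact Hol.eq_zero_of_forall_ordGE hD hDconn.isPreconnected fun n =>
    Hol.ordGE_iff_subPoint_pow_dvd.2 (subPoint_pow_dvd n)
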